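/- Let λ, μ ∈ P_n and let m ≥ λ'_1, μ'_1, with N = n + m. Then d_{λ,n}^μ(y) = (−1)^{|λ|+|μ|} · det(A_{I_{μ^c}, I_{λ^c}}), where A = ( e_{i−j}(y_1,…,y_i) )_{0≤i,j≤N−1}, and A_{I,J} denotes the n×n (respectively m×m) submatrix of A with row index set I and column index set J listed in increasing order. -/

import Mathlib

open Finset MvPolynomial

attribute [local instance] Classical.propDecidable

/-- A partition in `P_n`: a weakly decreasing sequence of naturals. -/
def IsPartition {n : ℕ} (lam : Fin n → ℕ) : Prop := Antitone lam

/-- The cells of the Young diagram of `lam`, as pairs (row, column), 0-based. -/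
noncomputable def cells {n : ℕ} (lam : Fin n → ℕ) : Finset (Fin n × ℕ) :=
  (Finset.univ ×ˢ Finset.range (Finset.univ.sup lam)).filter fun c => c.2 < lam c.1

/-- Semistandardness for a filling with values in `Fin n` (0-based values):
rows weakly increase, columns strictly increase. -/
def IsSSYT {n : ℕ} (lam : Fin n → ℕ) (T : cells lam → Fin n) : Prop :=
  (∀ c d : cells lam, (c : Fin n × ℕ).1 = (d : Fin n × ℕ).1 →
      (c : Fin n × ℕ).2 ≤ (d : Fin n × ℕ).2 → T c ≤ T d) ∧
  (∀ c d : cells lam, (c : Fin n × ℕ).2 = (d : Fin n × ℕ).2 →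
      (c : Fin n × ℕ).1 < (d : Fin n × ℕ).1 → T c < T d)

/-- The y-subscript `a + c(a) - r(a)` of a cell (1-based value and coordinates). -/
def ysub {n : ℕ} (a : Fin n) (c : Fin n × ℕ) : ℤ := (a : ℤ) + 1 + (c.2 : ℤ) - ((c.1 : ℕ) : ℤ)

/-- The Schur polynomial `s_lam(x_{(n)})`, in the ring with `x`-variables
`Sum.inl i` and `y`-variables `Sum.inr k` (`y_k` for `k ≥ 1`). -/
noncomputable def schurN (n : ℕ) (lam : Fin n → ℕ) : MvPolynomial (Fin n ⊕ ℤ) ℤ :=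
  ∑ T ∈ Finset.univ.filter (IsSSYT lam), ∏ c : cells lam, X (Sum.inl (T c))

/-- The factorial Schur polynomial `s_lam(x_{(n)} | y)`. -/
noncomputable def factSchurN (n : ℕ) (lam : Fin n → ℕ) : MvPolynomial (Fin n ⊕ ℤ) ℤ :=
  ∑ T ∈ Finset.univ.filter (IsSSYT lam),
    ∏ c : cells lam,
      (X (Sum.inl (T c)) + X (Sum.inr (ysub (T c) (c : Fin n × ℕ))))

/-- `e_d(y_1, …, y_p)`, the elementary symmetric polynomial in the variables
`y_1, …, y_p` (which is `0` for `d < 0` and for `d > p`, and `1` for `d = 0`),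
as a polynomial in the variables `y_k`, `k : ℤ`. -/
noncomputable def eY (p : ℕ) (d : ℤ) : MvPolynomial ℤ ℤ :=
  if 0 ≤ d then
    ∑ s ∈ Finset.powersetCard d.toNat ((Finset.range p).image fun k => (k + 1 : ℤ)),
      ∏ j ∈ s, X j
  else 0

/-- `h_d(-y_1, …, -y_p)`, the complete homogeneous symmetric polynomial of degree
`d` evaluated at the negated variables `-y_1, …, -y_p` (and `0` for `d < 0`). -/
noncomputable def hYneg (p : ℕ) (d : ℤ) : MvPolynomial ℤ ℤ :=
  if 0 ≤ d then
    ∑ m ∈ (Finset.range p).sym d.toNat,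
      ((m : Multiset ℕ).map fun k => -(X (k + 1 : ℤ) : MvPolynomial ℤ ℤ)).prod
  else 0

/-- The partition `λ^c ∈ P_m` complementary to `λ ∈ P_n` in the `n × m` rectangle:
`λ^c_i = n - λ'_{m+1-i}` (1-based), where `λ'_j = #{k : λ_k ≥ j}` is the conjugate. -/
noncomputable def conjComp (n m : ℕ) (lam : Fin n → ℕ) : Fin m → ℕ :=
  fun i => n - (Finset.univ.filter fun k : Fin n => m - (i : ℕ) ≤ lam k).card

/-!
By the bialternant formula, a factorial Schur polynomial times the Vandermonde determinant is the
determinant of the factorial powers `(x_j | y)^k` with `k` in `I_λ`; setting `y = 0` gives the same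
for ordinary powers and ordinary Schur polynomials. Hence `d_{λ,n}^μ(y)` is the `n × n` minor, with
rows `I_λ` and columns `I_μ`, of the matrix expanding ordinary powers in factorial powers. That
matrix is the inverse of `A`, which is unitriangular, so Jacobi's complementary minor identity turns
the minor into an `m × m` minor of `A`. The sign is the product of the signs of the two shuffles
listing `I_λ`, `I_{λ^c}` and `I_μ`, `I_{μ^c}`; these have `|λ|` and `|μ|` inversions.

The bialternant formula is proved by induction on `n`: removing the largest entry from a tableau
leaves a tableau of interlacing shape, and eliminating the variable `x_n` from the determinant
yields the same recursion.
-/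

section Determinants

variable {R : Type*} [CommRing R]

theorem det_of_sum_mul {ι κ : Type*} [Fintype ι] [DecidableEq ι] (S : ι → Finset κ)
    (g : ι → κ → R) (h : ι → κ → ι → R) :
    (Matrix.of fun i j => ∑ v ∈ S i, g i v * h i v j).det =
      ∑ ν ∈ Fintype.piFinset S,
        (∏ i, g i (ν i)) * (Matrix.of fun i j => h i (ν i) j).det := by
  have rows : (Matrix.of fun i j => ∑ v ∈ S i, g i v * h i v j) =
      fun i => ∑ v ∈ S i, g i v • h i v := by
    ext i j
    simp [Finset.sum_apply]
  rw [rows]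
  refine (MultilinearMap.map_sum_finset (Matrix.detRowAlternating (R := R)).toMultilinearMap
    (fun i v => g i v • h i v) S).trans (sum_congr rfl fun ν _ => ?_)
  exact MultilinearMap.map_smul_univ _ (fun i => g i (ν i)) fun i => h i (ν i)

theorem det_vandermonde_castSucc {n : ℕ} (x : Fin (n + 1) → R) :
    (Matrix.vandermonde x).det =
      (∏ j : Fin n, (x (Fin.last n) - x j.castSucc)) *
        (Matrix.vandermonde fun j : Fin n => x j.castSucc).det := by
  have prod_Iio {k : ℕ} (z : Fin k → R) : (Matrix.vandermonde z).det =
      ∏ j, ∏ i ∈ Iio j, (z j - z i) := by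
    rw [Matrix.det_vandermonde]
    exact prod_comm' fun i j => by simp
  rw [prod_Iio, prod_Iio, Fin.prod_univ_castSucc, mul_comm]
  simp only [Fin.prod_Iio_castSucc, Fin.Iio_last_eq_map, prod_map,
    Fin.coe_castSuccEmb]

theorem det_ite_eq_of_strictMono {n : ℕ} {α : Type*} [LinearOrder α] {f g : Fin n → α}
    (hf : StrictMono f) (hg : StrictMono g) :
    (Matrix.of fun i j => if f i = g j then (1 : R) else 0).det = if f = g then 1 else 0 := by
  by_cases hfg : f = g
  · rw [if_pos hfg, ← Matrix.det_one (n := Fin n)]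
    congr 1
    ext i j
    simp [hfg, hg.injective.eq_iff, Matrix.one_apply]
  rw [if_neg hfg]
  have exists_row : ∃ i, ∀ j, f i ≠ g j := by
    by_contra! h
    choose σ hσ using h
    have surjective : Function.Surjective σ :=
      Finite.surjective_of_injective fun i i' hi =>
        hf.injective (by rw [hσ, hσ, hi])
    refine hfg ((hf.range_inj hg).1 ?_)
    rw [show f = g ∘ σ from funext hσ, surjective.range_comp]
  obtain ⟨i, hi⟩ := exists_row
  exact Matrix.det_eq_zero_of_row_eq_zero i fun j => if_neg (hi j)

/- Jacobi's complementary minor identity, without division: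
`P` maps the first block column of `Q`, completed by unit vectors, to a block triangular matrix. -/
theorem det_mul_det_toBlocks₁₁_of_mul_eq_one {m n : Type*} [Fintype m] [Fintype n]
    [DecidableEq m] [DecidableEq n] {P Q : Matrix (m ⊕ n) (m ⊕ n) R} (h : P * Q = 1) :
    P.det * Q.toBlocks₁₁.det = P.toBlocks₂₂.det := by
  have block_columns : P * Matrix.fromBlocks Q.toBlocks₁₁ 0 Q.toBlocks₂₁ 1 =
      Matrix.fromBlocks 1 P.toBlocks₁₂ 0 P.toBlocks₂₂ := by
    rw [← Matrix.fromBlocks_toBlocks P, ← Matrix.fromBlocks_toBlocks Q,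
      Matrix.fromBlocks_multiply, ← Matrix.fromBlocks_one, Matrix.fromBlocks_inj] at h
    conv_lhs => rw [← Matrix.fromBlocks_toBlocks P]
    rw [Matrix.fromBlocks_multiply, h.1, h.2.2.1]
    simp
  simpa using congrArg Matrix.det block_columns

theorem det_submatrix_equiv_equiv {m n : Type*} [Fintype m] [Fintype n] [DecidableEq m]
    [DecidableEq n] (M : Matrix n n R) (e f : m ≃ n) (g : n ≃ m) :
    (M.submatrix e f).det =
      ((Equiv.Perm.sign (g.trans e) * Equiv.Perm.sign (g.trans f) : ℤˣ) : ℤ) * M.det := by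
  rw [← Matrix.det_submatrix_equiv_self g]
  change ((M.submatrix (g.trans e) id).submatrix id (g.trans f)).det = _
  rw [Matrix.det_permute', Matrix.det_permute]
  push_cast
  ring

theorem sign_of_strictMono_inl_inr {n m : ℕ} (e : Fin n ⊕ Fin m ≃ Fin (n + m))
    (hl : StrictMono (e ∘ Sum.inl)) (hr : StrictMono (e ∘ Sum.inr)) :
    Equiv.Perm.sign (finSumFinEquiv.symm.trans e) =
      (-1) ^ ∑ i, #{k | e (Sum.inr k) < e (Sum.inl i)} := by
  set σ : Equiv.Perm (Fin (n + m)) := finSumFinEquiv.symm.trans e with hσ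
  have σ_castAdd (i : Fin n) : σ (Fin.castAdd m i) = e (Sum.inl i) := by simp [hσ]
  have σ_natAdd (k : Fin m) : σ (Fin.natAdd n k) = e (Sum.inr k) := by simp [hσ]
  have inversions : Equiv.Perm.sign σ =
      ∏ a, ∏ b, if a < b ∧ σ b < σ a then (-1 : ℤˣ) else 1 := by
    rw [σ.sign_eq_prod_prod_Ioi]
    refine prod_congr rfl fun a _ => ?_
    rw [← filter_lt_eq_Ioi, prod_filter]
    refine prod_congr rfl fun b _ => ?_
    have (hab : a < b) := σ.injective.ne hab.ne
    grind
  have not_inl_inl (i j : Fin n) :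
      ¬(Fin.castAdd m i < Fin.castAdd m j ∧ e (Sum.inl j) < e (Sum.inl i)) :=
    fun h => (hl (Fin.lt_def.2 h.1)).asymm h.2
  have not_inr_inr (k l : Fin m) :
      ¬(Fin.natAdd n k < Fin.natAdd n l ∧ e (Sum.inr l) < e (Sum.inr k)) :=
    fun h => (hr ((Fin.natAdd_lt_natAdd_iff n).1 h.1)).asymm h.2
  have inl_lt_inr (i : Fin n) (k : Fin m) : Fin.castAdd m i < Fin.natAdd n k := by
    simp only [Fin.lt_def, Fin.val_castAdd, Fin.val_natAdd]
    lia
  simp only [inversions, Fin.prod_univ_add, σ_castAdd, σ_natAdd, not_inl_inl, not_inr_inr,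
    inl_lt_inr, (inl_lt_inr _ _).not_gt, true_and, false_and, if_false, prod_const_one, one_mul,
    mul_one]
  simp only [prod_ite, prod_const, one_pow, mul_one, prod_pow_eq_pow_sum]

end Determinants

section FactorialPowers

variable {R : Type*} [CommRing R]

/-- The factorial power `(z | y)^k = (z + y_1) ⋯ (z + y_k)`. -/
def factPow (y : ℤ → R) (k : ℕ) (z : R) : R :=
  ∏ t ∈ range k, (z + y (t + 1))

theorem factPow_succ (y : ℤ → R) (k : ℕ) (z : R) :
    factPow y (k + 1) z = factPow y k z * (z + y (k + 1)) :=
  prod_range_succ _ k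

theorem factPow_zero_left (k : ℕ) (z : R) : factPow (fun _ => 0) k z = z ^ k := by
  simp [factPow]

/-- The quotient of `(w | y)^b - (z + y_{a+1}) ⋯ (z + y_b) (w | y)^a` by `w - z`, where `a ≤ b`. -/
def factPowQuot (y : ℤ → R) (a b : ℕ) (z w : R) : R :=
  ∑ l ∈ Ico a b, (∏ t ∈ Ico (l + 1) b, (z + y (t + 1))) * factPow y l w

theorem factPowQuot_succ (y : ℤ → R) {a b : ℕ} (hab : a ≤ b) (z w : R) :
    factPowQuot y a (b + 1) z w = (z + y (b + 1)) * factPowQuot y a b z w + factPow y b w := by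
  rw [factPowQuot, factPowQuot, sum_Ico_succ_top hab, Ico_self, prod_empty, one_mul, mul_sum]
  congr 1
  refine sum_congr rfl fun l hl => ?_
  rw [prod_Ico_succ_top (mem_Ico.1 hl).2]
  ring

theorem factPow_sub_prod_mul_factPow (y : ℤ → R) {a b : ℕ} (hab : a ≤ b) (z w : R) :
    factPow y b w - (∏ t ∈ Ico a b, (z + y (t + 1))) * factPow y a w =
      (w - z) * factPowQuot y a b z w := by
  induction b, hab using Nat.le_induction with
  | base => simp [factPowQuot]
  | succ b hab ih =>
    rw [prod_Ico_succ_top hab, factPow_succ, factPowQuot_succ y hab]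
    linear_combination (z + y (b + 1)) * ih

/- Subtracting from each row the multiple of the previous one that kills its last entry leaves a
single nonzero entry in the last column. -/
theorem det_factPow_castSucc (y : ℤ → R) {n : ℕ} {k : Fin (n + 1) → ℕ}
    (hk : ∀ i : Fin n, k i.castSucc ≤ k i.succ) (x : Fin (n + 1) → R) :
    (Matrix.of fun i j => factPow y (k i) (x j)).det =
      (∏ j : Fin n, (x (Fin.last n) - x j.castSucc)) * (factPow y (k 0) (x (Fin.last n)) *
        (Matrix.of fun i j : Fin n =>
          factPowQuot y (k i.castSucc) (k i.succ) (x (Fin.last n)) (x j.castSucc)).det) := by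
  set z := x (Fin.last n) with hz
  set Q := Matrix.of fun i j : Fin n => factPowQuot y (k i.castSucc) (k i.succ) z (x j.castSucc)
  let c (i : Fin n) : R := ∏ t ∈ Ico (k i.castSucc) (k i.succ), (z + y (t + 1))
  let reduced : Matrix (Fin (n + 1)) (Fin (n + 1)) R := Matrix.of fun i j =>
    Fin.cases (factPow y (k 0) (x j))
      (fun i => factPow y (k i.succ) (x j) - c i * factPow y (k i.castSucc) (x j)) i
  have det_reduced : (Matrix.of fun i j => factPow y (k i) (x j)).det = reduced.det :=
    Matrix.det_eq_of_forall_row_eq_smul_add_pred c (fun j => by simp [reduced])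
      fun i j => by simp [reduced]
  have reduced_succ (i : Fin n) (j : Fin (n + 1)) :
      reduced i.succ j = (x j - z) * factPowQuot y (k i.castSucc) (k i.succ) z (x j) :=
    factPow_sub_prod_mul_factPow y (hk i) z (x j)
  have last_column (i : Fin n) : reduced i.succ (Fin.last n) = 0 := by
    rw [reduced_succ, ← hz, sub_self, zero_mul]
  have minor : reduced.submatrix (Fin.succAbove 0) (Fin.succAbove (Fin.last n)) =
      -Matrix.of fun i j : Fin n => (z - x j.castSucc) * Q i j := by
    ext i j
    simp only [Matrix.submatrix_apply, Fin.zero_succAbove, Fin.succAbove_last, reduced_succ,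
      Matrix.neg_apply, Matrix.of_apply, Q]
    ring
  have sign_sq : (-1 : R) ^ n * (-1) ^ n = 1 := by rw [← mul_pow]; simp
  rw [det_reduced, Matrix.det_succ_column reduced (Fin.last n), Fin.sum_univ_succ,
    sum_eq_zero fun i _ => by rw [last_column]; ring, minor, Matrix.det_neg, Matrix.det_mul_row]
  simp only [Fin.val_zero, Fin.val_last, zero_add, Fintype.card_fin, reduced, Matrix.of_apply,
    Fin.cases_zero]
  linear_combination ((∏ j : Fin n, (z - x j.castSucc)) * (factPow y (k 0) z * Q.det)) * sign_sq

end FactorialPowers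

section Branching

variable {R : Type*} [CommRing R] {n : ℕ}

/-- The `i`-th smallest element `ν_{n-i} + i` (with `i` counted from `0`) of the index set
`I_ν = {ν_1 + n - 1, …, ν_n}` of a partition `ν` with `n` parts. -/
def sortedIndex (ν : Fin n → ℕ) (i : Fin n) : ℕ :=
  ν i.rev + i

/-- The partitions `ν` with `n` parts which interlace `lam`, that is `lam_{i+1} ≤ ν_i ≤ lam_i`. -/
def interlacing (lam : Fin (n + 1) → ℕ) : Finset (Fin n → ℕ) :=
  Fintype.piFinset fun i => Icc (lam i.succ) (lam i.castSucc)

/-- The factorial weight of the skew diagram `lam / ν` when all of its cells contain the largest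
entry, to which the variable `z` is attached. -/
def stripWeight (y : ℤ → R) (lam : Fin (n + 1) → ℕ) (ν : Fin n → ℕ) (z : R) : R :=
  (∏ i : Fin n, ∏ c ∈ Ico (ν i) (lam i.castSucc),
      (z + y (ysub (Fin.last n) (i.castSucc, c)))) *
    ∏ c ∈ range (lam (Fin.last n)), (z + y (ysub (Fin.last n) (Fin.last n, c)))

theorem mem_interlacing {lam : Fin (n + 1) → ℕ} {ν : Fin n → ℕ} :
    ν ∈ interlacing lam ↔ ∀ i, lam i.succ ≤ ν i ∧ ν i ≤ lam i.castSucc := by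
  simp only [interlacing, Fintype.mem_piFinset, mem_Icc]

theorem isPartition_of_mem_interlacing {lam : Fin (n + 1) → ℕ} (hlam : IsPartition lam)
    {ν : Fin n → ℕ} (hν : ν ∈ interlacing lam) : IsPartition ν := by
  rw [mem_interlacing] at hν
  intro i j hij
  obtain rfl | hlt := hij.eq_or_lt
  · rfl
  calc ν j ≤ lam j.castSucc := (hν j).2
    _ ≤ lam i.succ := hlam (Fin.succ_le_castSucc_iff.2 hlt)
    _ ≤ ν i := (hν i).1

theorem factPowQuot_sortedIndex (y : ℤ → R) {lam : Fin (n + 1) → ℕ} (i : Fin n) (z w : R) :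
    factPowQuot y (sortedIndex lam i.castSucc) (sortedIndex lam i.succ) z w =
      ∑ v ∈ Icc (lam i.rev.succ) (lam i.rev.castSucc),
        (∏ c ∈ Ico v (lam i.rev.castSucc), (z + y (ysub (Fin.last n) (i.rev.castSucc, c)))) *
          factPow y (v + i) w := by
  rw [factPowQuot, sortedIndex, sortedIndex, Fin.rev_castSucc, Fin.rev_succ, Fin.val_castSucc,
    Fin.val_succ, ← add_assoc, add_right_comm, ← sum_Ico_add', Ico_add_one_right_eq_Icc]
  refine sum_congr rfl fun v _ => ?_
  rw [add_assoc v, add_assoc _ 1, add_comm 1, ← prod_Ico_add']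
  refine congrArg (· * _) (prod_congr rfl fun c _ => ?_)
  congr 2
  simp only [ysub, Fin.val_last, Fin.val_castSucc, Fin.val_rev]
  omega

theorem det_factPow_sortedIndex_castSucc (y : ℤ → R) {lam : Fin (n + 1) → ℕ}
    (hlam : IsPartition lam) (x : Fin (n + 1) → R) :
    (Matrix.of fun i j => factPow y (sortedIndex lam i) (x j)).det =
      (∏ j : Fin n, (x (Fin.last n) - x j.castSucc)) *
        ∑ ν ∈ interlacing lam, stripWeight y lam ν (x (Fin.last n)) *
          (Matrix.of fun i j : Fin n => factPow y (sortedIndex ν i) (x j.castSucc)).det := by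
  have index_le (i : Fin n) : sortedIndex lam i.castSucc ≤ sortedIndex lam i.succ := by
    rw [sortedIndex, sortedIndex, Fin.rev_castSucc, Fin.rev_succ]
    exact add_le_add (hlam Fin.castSucc_lt_succ.le) (Nat.le_succ _)
  have last_row : factPow y (sortedIndex lam 0) (x (Fin.last n)) =
      ∏ c ∈ range (lam (Fin.last n)), (x (Fin.last n) + y (ysub (Fin.last n) (Fin.last n, c))) := by
    simp only [factPow, sortedIndex, Fin.rev_zero, Fin.val_zero, add_zero, ysub]
    exact prod_congr rfl fun c _ => by congr 2; ring
  rw [det_factPow_castSucc y index_le, last_row]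
  simp only [factPowQuot_sortedIndex]
  rw [det_of_sum_mul (fun i : Fin n => Icc (lam i.rev.succ) (lam i.rev.castSucc)) _
    fun i v j => factPow y (v + i) (x j.castSucc), mul_sum]
  congr 1
  refine sum_nbij' (· ∘ Fin.rev) (· ∘ Fin.rev) ?_ ?_ ?_ ?_ ?_
  · intro ν hν
    simp only [Fintype.mem_piFinset, mem_Icc] at hν
    exact mem_interlacing.2 fun i => by simpa using hν i.rev
  · intro ν hν
    simp only [Fintype.mem_piFinset, mem_Icc]
    exact fun i => mem_interlacing.1 hν i.rev
  · intro ν _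
    simp [Function.comp_def]
  · intro ν _
    simp [Function.comp_def]
  · intro ν _
    rw [stripWeight, ← Equiv.prod_comp Fin.revPerm]
    simp only [Fin.revPerm_apply, Function.comp_apply, Fin.rev_rev, sortedIndex]
    ring

end Branching

section Tableaux

variable {R S : Type*} [CommRing R] [CommRing S] {n : ℕ}

theorem mem_cells {lam : Fin n → ℕ} {c : Fin n × ℕ} : c ∈ cells lam ↔ c.2 < lam c.1 := by
  simp only [cells, mem_filter, mem_product, mem_univ, mem_range, true_and, and_iff_right_iff_imp]
  exact fun h => h.trans_le (le_sup (mem_univ c.1))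

theorem prod_cells {lam : Fin n → ℕ} (F : cells lam → R) :
    ∏ c, F c = ∏ i, ∏ c ∈ range (lam i), if h : (i, c) ∈ cells lam then F ⟨(i, c), h⟩ else 1 := by
  let F' (c : Fin n × ℕ) : R := if h : c ∈ cells lam then F ⟨c, h⟩ else 1
  have F_eq (c : cells lam) : F c = F' c := by simp [F']
  rw [Fintype.prod_congr F (fun c => F' c) F_eq, prod_coe_sort (cells lam) F']
  exact prod_finset_product _ univ (fun i => range (lam i)) fun c => by simp [mem_cells]

/-- The weight `∏ (x_a + y_{a + c(a) - r(a)})` of a filling in a factorial Schur polynomial. -/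
noncomputable def tableauWeight {lam : Fin n → ℕ} (x : Fin n → R) (y : ℤ → R)
    (T : cells lam → Fin n) : R :=
  ∏ c : cells lam, (x (T c) + y (ysub (T c) c))

/-- The factorial Schur polynomial `s_lam(x | y)`, evaluated in an arbitrary commutative ring. -/
noncomputable def factSchur (lam : Fin n → ℕ) (x : Fin n → R) (y : ℤ → R) : R :=
  ∑ T : cells lam → Fin n with IsSSYT lam T, tableauWeight x y T

theorem factSchur_of_isEmpty (lam : Fin 0 → ℕ) (x : Fin 0 → R) (y : ℤ → R) :
    factSchur lam x y = 1 := by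
  have : IsEmpty (cells lam) := ⟨fun c => c.1.1.elim0⟩
  have univ_filter : ({T | IsSSYT lam T} : Finset (cells lam → Fin 0)) = univ :=
    filter_true_of_mem fun T _ => ⟨isEmptyElim, isEmptyElim⟩
  rw [factSchur, univ_filter]
  simp [tableauWeight]

theorem IsSSYT.row_le {lam : Fin n → ℕ} (hlam : IsPartition lam) {T : cells lam → Fin n}
    (hT : IsSSYT lam T) (c : cells lam) : (c : Fin n × ℕ).1 ≤ T c := by
  obtain ⟨⟨⟨i, hi⟩, c⟩, hc⟩ := c
  induction i with
  | zero => exact Nat.zero_le _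
  | succ i ih =>
    have hc' : (⟨i, by omega⟩, c) ∈ cells lam :=
      mem_cells.2 ((mem_cells.1 hc).trans_le (hlam (Nat.le_succ i)))
    exact Nat.succ_le_of_lt ((ih _ hc').trans_lt (hT.2 ⟨_, hc'⟩ ⟨_, hc⟩ rfl (Nat.lt_succ_self i)))

theorem IsSSYT.apply_last {lam : Fin (n + 1) → ℕ} (hlam : IsPartition lam)
    {T : cells lam → Fin (n + 1)} (hT : IsSSYT lam T) {c : ℕ} (h : (Fin.last n, c) ∈ cells lam) :
    T ⟨_, h⟩ = Fin.last n :=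
  Fin.last_le_iff.1 (hT.row_le hlam ⟨_, h⟩)

/-- The shape formed by the cells of `T` which do not contain the largest entry. -/
noncomputable def innerShape {lam : Fin (n + 1) → ℕ} (T : cells lam → Fin (n + 1)) (i : Fin n) :
    ℕ :=
  #{c : Fin (lam i.castSucc) | T ⟨(i.castSucc, c), mem_cells.2 c.2⟩ ≠ Fin.last n}

theorem innerShape_le {lam : Fin (n + 1) → ℕ} (T : cells lam → Fin (n + 1)) (i : Fin n) :
    innerShape T i ≤ lam i.castSucc :=
  (card_filter_le _ _).trans (card_fin _).le

theorem IsSSYT.lt_innerShape_iff {lam : Fin (n + 1) → ℕ} {T : cells lam → Fin (n + 1)}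
    (hT : IsSSYT lam T) {i : Fin n} {c : ℕ} (h : (i.castSucc, c) ∈ cells lam) :
    c < innerShape T i ↔ T ⟨_, h⟩ ≠ Fin.last n :=
  Fin.lt_card_filter_univ_iff_apply_of_imp (j := ⟨c, mem_cells.1 h⟩)
    (fun c => T ⟨(i.castSucc, c), mem_cells.2 c.2⟩ ≠ Fin.last n)
    fun _ _ hle hne heq => hne (Fin.last_le_iff.1 (heq.ge.trans (hT.1 _ _ rfl hle)))

theorem IsSSYT.innerShape_mem_interlacing {lam : Fin (n + 1) → ℕ} (hlam : IsPartition lam)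
    {T : cells lam → Fin (n + 1)} (hT : IsSSYT lam T) : innerShape T ∈ interlacing lam := by
  refine mem_interlacing.2 fun i => ⟨?_, innerShape_le T i⟩
  by_contra! hlt
  have below : (i.succ, innerShape T i) ∈ cells lam := mem_cells.2 hlt
  have above : (i.castSucc, innerShape T i) ∈ cells lam :=
    mem_cells.2 (hlt.trans_le (hlam Fin.castSucc_lt_succ.le))
  exact (hT.lt_innerShape_iff above).not.1 (lt_irrefl _)
    ((hT.2 ⟨_, above⟩ ⟨_, below⟩ rfl Fin.castSucc_lt_succ).trans_le (Fin.le_last _)).ne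

/-- The filling of `lam` which agrees with `T` on `ν` and has the largest entry elsewhere. -/
noncomputable def extendTableau (lam : Fin (n + 1) → ℕ) {ν : Fin n → ℕ} (T : cells ν → Fin n)
    (c : cells lam) : Fin (n + 1) :=
  Fin.lastCases (Fin.last n)
    (fun i => if h : (i, (c : Fin (n + 1) × ℕ).2) ∈ cells ν then (T ⟨_, h⟩).castSucc
      else Fin.last n)
    (c : Fin (n + 1) × ℕ).1

variable {lam : Fin (n + 1) → ℕ} {ν : Fin n → ℕ}

theorem extendTableau_last (T : cells ν → Fin n) {c : ℕ} (h : (Fin.last n, c) ∈ cells lam) :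
    extendTableau lam T ⟨_, h⟩ = Fin.last n := by
  simp [extendTableau]

theorem extendTableau_of_mem (T : cells ν → Fin n) {i : Fin n} {c : ℕ}
    (h : (i.castSucc, c) ∈ cells lam) (h' : (i, c) ∈ cells ν) :
    extendTableau lam T ⟨_, h⟩ = (T ⟨_, h'⟩).castSucc := by
  simp [extendTableau, h']

theorem extendTableau_of_notMem (T : cells ν → Fin n) {i : Fin n} {c : ℕ}
    (h : (i.castSucc, c) ∈ cells lam) (h' : (i, c) ∉ cells ν) :
    extendTableau lam T ⟨_, h⟩ = Fin.last n := by
  simp [extendTableau, h']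

theorem castSucc_mem_cells (hν : ν ∈ interlacing lam) {i : Fin n} {c : ℕ}
    (h : (i, c) ∈ cells ν) : (i.castSucc, c) ∈ cells lam :=
  mem_cells.2 ((mem_cells.1 h).trans_le (mem_interlacing.1 hν i).2)

theorem mem_cells_of_castSucc_lt (hlam : IsPartition lam) (hν : ν ∈ interlacing lam) {i : Fin n}
    {j : Fin (n + 1)} {c : ℕ} (hij : i.castSucc < j) (h : (j, c) ∈ cells lam) :
    (i, c) ∈ cells ν :=
  mem_cells.2 ((mem_cells.1 h).trans_le
    ((hlam (Fin.castSucc_lt_iff_succ_le.1 hij)).trans (mem_interlacing.1 hν i).1))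

theorem isSSYT_extendTableau (hlam : IsPartition lam) (hν : ν ∈ interlacing lam)
    {T : cells ν → Fin n} (hT : IsSSYT ν T) : IsSSYT lam (extendTableau lam T) := by
  constructor
  · rintro ⟨⟨i, c⟩, hc⟩ ⟨⟨_, e⟩, he⟩ (rfl : i = _) (hce : c ≤ e)
    induction i using Fin.lastCases with
    | last => rw [extendTableau_last, extendTableau_last]
    | cast i =>
      by_cases he' : (i, e) ∈ cells ν
      · have hc' : (i, c) ∈ cells ν := mem_cells.2 (hce.trans_lt (mem_cells.1 he'))
        rw [extendTableau_of_mem T he he', extendTableau_of_mem T hc hc']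
        exact Fin.castSucc_le_castSucc_iff.2 (hT.1 _ _ rfl hce)
      · rw [extendTableau_of_notMem T he he']
        exact Fin.le_last _
  · rintro ⟨⟨i, c⟩, hc⟩ ⟨⟨j, _⟩, he⟩ (rfl : c = _) (hij : i < j)
    induction i using Fin.lastCases with
    | last => exact absurd hij (Fin.le_last j).not_gt
    | cast i =>
      rw [extendTableau_of_mem T hc (mem_cells_of_castSucc_lt hlam hν hij he)]
      induction j using Fin.lastCases with
      | last => rw [extendTableau_last]; exact Fin.castSucc_lt_last _
      | cast j =>
        by_cases he' : (j, c) ∈ cells ν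
        · rw [extendTableau_of_mem T he he']
          exact Fin.castSucc_lt_castSucc_iff.2 (hT.2 _ _ rfl (Fin.castSucc_lt_castSucc_iff.1 hij))
        · rw [extendTableau_of_notMem T he he']
          exact Fin.castSucc_lt_last _

theorem innerShape_extendTableau (hlam : IsPartition lam) (hν : ν ∈ interlacing lam)
    {T : cells ν → Fin n} (hT : IsSSYT ν T) : innerShape (extendTableau lam T) = ν := by
  funext i
  refine eq_of_forall_lt_iff fun c => ?_
  by_cases h : (i.castSucc, c) ∈ cells lam
  · rw [(isSSYT_extendTableau hlam hν hT).lt_innerShape_iff h]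
    by_cases h' : (i, c) ∈ cells ν
    · simpa [extendTableau_of_mem T h h'] using mem_cells.1 h'
    · simpa [extendTableau_of_notMem T h h'] using mem_cells.not.1 h'
  · have lam_le : lam i.castSucc ≤ c := not_lt.1 (mem_cells.not.1 h)
    exact iff_of_false ((innerShape_le _ i).trans lam_le).not_gt
      ((mem_interlacing.1 hν i).2.trans lam_le).not_gt

theorem extendTableau_injective (hν : ν ∈ interlacing lam) :
    Function.Injective (extendTableau lam : (cells ν → Fin n) → cells lam → Fin (n + 1)) := by
  rintro T T' h
  funext ⟨⟨i, c⟩, hc⟩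
  have := congrFun h ⟨_, castSucc_mem_cells hν hc⟩
  rwa [extendTableau_of_mem T _ hc, extendTableau_of_mem T' _ hc, Fin.castSucc_inj] at this

theorem IsSSYT.exists_extendTableau_eq (hlam : IsPartition lam) {T : cells lam → Fin (n + 1)}
    (hT : IsSSYT lam T) :
    ∃ T' : cells (innerShape T) → Fin n,
      IsSSYT (innerShape T) T' ∧ extendTableau lam T' = T := by
  have cell_mem (c : cells (innerShape T)) :
      ((c : Fin n × ℕ).1.castSucc, (c : Fin n × ℕ).2) ∈ cells lam :=
    castSucc_mem_cells (hT.innerShape_mem_interlacing hlam) c.2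
  have exists_castSucc (c : cells (innerShape T)) : ∃ a : Fin n, a.castSucc = T ⟨_, cell_mem c⟩ :=
    Fin.exists_castSucc_eq.2 ((hT.lt_innerShape_iff _).1 (mem_cells.1 c.2))
  choose T' hT' using exists_castSucc
  refine ⟨T', ⟨fun c d hrow hcol => ?_, fun c d hcol hrow => ?_⟩, ?_⟩
  · rw [← Fin.castSucc_le_castSucc_iff, hT', hT']
    exact hT.1 _ _ (congrArg Fin.castSucc hrow) hcol
  · rw [← Fin.castSucc_lt_castSucc_iff, hT', hT']
    exact hT.2 _ _ hcol (Fin.castSucc_lt_castSucc_iff.2 hrow)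
  · funext ⟨⟨i, c⟩, h⟩
    induction i using Fin.lastCases with
    | last => rw [extendTableau_last, hT.apply_last hlam]
    | cast i =>
      by_cases h' : (i, c) ∈ cells (innerShape T)
      · rw [extendTableau_of_mem T' h h', hT']
      · rw [extendTableau_of_notMem T' h h']
        exact (not_not.1 ((hT.lt_innerShape_iff h).not.1 (mem_cells.not.1 h'))).symm

theorem tableauWeight_extendTableau (x : Fin (n + 1) → R) (y : ℤ → R) (hν : ν ∈ interlacing lam)
    (T : cells ν → Fin n) :
    tableauWeight x y (extendTableau lam T) =
      stripWeight y lam ν (x (Fin.last n)) * tableauWeight (fun j => x j.castSucc) y T := by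
  rw [tableauWeight, tableauWeight, prod_cells, prod_cells, Fin.prod_univ_castSucc, stripWeight,
    mul_right_comm, ← prod_mul_distrib]
  congr 1
  · refine prod_congr rfl fun i _ => ?_
    rw [← prod_range_mul_prod_Ico _ (mem_interlacing.1 hν i).2, mul_comm]
    congr 1
    · refine prod_congr rfl fun c hc => ?_
      have h : (i.castSucc, c) ∈ cells lam := mem_cells.2 (mem_Ico.1 hc).2
      have h' : (i, c) ∉ cells ν := mem_cells.not.2 (mem_Ico.1 hc).1.not_gt
      rw [dif_pos h, extendTableau_of_notMem T h h']
    · refine prod_congr rfl fun c hc => ?_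
      have h' : (i, c) ∈ cells ν := mem_cells.2 (mem_range.1 hc)
      have h := castSucc_mem_cells hν h'
      rw [dif_pos h, dif_pos h', extendTableau_of_mem T h h']
      rfl
  · refine prod_congr rfl fun c hc => ?_
    have h : (Fin.last n, c) ∈ cells lam := mem_cells.2 (mem_range.1 hc)
    rw [dif_pos h, extendTableau_last]

theorem factSchur_castSucc (hlam : IsPartition lam) (x : Fin (n + 1) → R) (y : ℤ → R) :
    factSchur lam x y = ∑ ν ∈ interlacing lam,
      stripWeight y lam ν (x (Fin.last n)) * factSchur ν (fun j => x j.castSucc) y := by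
  rw [factSchur, ← sum_fiberwise_of_maps_to fun T hT =>
    (mem_filter.1 hT).2.innerShape_mem_interlacing hlam]
  refine sum_congr rfl fun ν hν => ?_
  rw [factSchur, mul_sum]
  symm
  refine sum_nbij (extendTableau lam) (fun T hT => ?_) (extendTableau_injective hν).injOn
    (fun T hT => ?_) fun T _ => (tableauWeight_extendTableau x y hν T).symm
  · have hT := (mem_filter.1 hT).2
    simpa [innerShape_extendTableau hlam hν hT] using isSSYT_extendTableau hlam hν hT
  · simp only [coe_filter, mem_filter, mem_univ, true_and, Set.mem_ofPred_eq] at hT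
    obtain ⟨hT, rfl⟩ := hT
    obtain ⟨T', hT', hext⟩ := hT.exists_extendTableau_eq hlam
    exact ⟨T', by simpa using hT', hext⟩

theorem map_factSchur (φ : R →+* S) (lam : Fin n → ℕ) (x : Fin n → R) (y : ℤ → R) :
    φ (factSchur lam x y) = factSchur lam (fun i => φ (x i)) fun t => φ (y t) := by
  simp only [factSchur, tableauWeight, map_sum, map_prod, map_add]

theorem det_factPow_sortedIndex (y : ℤ → R) {lam : Fin n → ℕ} (hlam : IsPartition lam)
    (x : Fin n → R) :
    (Matrix.of fun i j => factPow y (sortedIndex lam i) (x j)).det =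
      (Matrix.vandermonde x).det * factSchur lam x y := by
  induction n with
  | zero => simp [factSchur_of_isEmpty]
  | succ n ih =>
    rw [det_factPow_sortedIndex_castSucc y hlam, det_vandermonde_castSucc,
      factSchur_castSucc hlam, mul_assoc]
    congr 1
    rw [mul_sum]
    refine sum_congr rfl fun ν hν => ?_
    rw [ih (isPartition_of_mem_interlacing hlam hν)]
    ring

end Tableaux

section ProductFunctional

variable {R : Type*} [CommRing R] {ι : Type*} [Fintype ι]

/-- The tensor product of linear functionals `Λ i` on `R[x_i]`, as a functional on the polynomial
ring in all of the variables `x_i`. -/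
noncomputable def productFunctional (Λ : ι → Polynomial R →ₗ[R] R) : MvPolynomial ι R →ₗ[R] R :=
  (basisMonomials ι R).constr R fun a => ∏ i, Λ i (Polynomial.X ^ a i)

theorem productFunctional_prod_aeval (Λ : ι → Polynomial R →ₗ[R] R) (p : ι → Polynomial R) :
    productFunctional Λ (∏ i, Polynomial.aeval (X i) (p i)) = ∏ i, Λ i (p i) := by
  have multilinear_eq :
      (productFunctional Λ).compMultilinearMap
          ((MultilinearMap.mkPiAlgebra R ι (MvPolynomial ι R)).compLinearMap
            fun i => (Polynomial.aeval (X i)).toLinearMap) =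
        (MultilinearMap.mkPiAlgebra R ι R).compLinearMap Λ := by
    refine Module.Basis.ext_multilinear (fun _ => Polynomial.basisMonomials R) fun a => ?_
    have monomial_eq_prod : ∏ i, (X i : MvPolynomial ι R) ^ a i =
        basisMonomials ι R (Finsupp.equivFunOnFinite.symm a) := by
      rw [coe_basisMonomials]
      change _ = monomial _ _
      rw [monomial_eq, Finsupp.prod_fintype _ _ (by simp)]
      simp
    simp [Polynomial.monomial_one_right_eq_X_pow, monomial_eq_prod, productFunctional,
      Module.Basis.constr_basis, -coe_basisMonomials]
  exact congrArg (· p) multilinear_eq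

theorem productFunctional_det_aeval [DecidableEq ι] (Λ : ι → Polynomial R →ₗ[R] R)
    (p : ι → Polynomial R) :
    productFunctional Λ (Matrix.of fun i j => Polynomial.aeval (X j) (p i)).det =
      (Matrix.of fun i j => Λ j (p i)).det := by
  simp only [Matrix.det_apply, map_sum, Units.smul_def, map_zsmul, Matrix.of_apply]
  exact sum_congr rfl fun σ _ => congrArg _ (productFunctional_prod_aeval Λ fun j => p (σ j))

end ProductFunctional

section FactorialBasis

variable {R : Type*} [CommRing R]

/-- The factorial power `(x | y)^k` as a polynomial in `x`. -/
noncomputable def factPowPoly (y : ℤ → R) (k : ℕ) : Polynomial R :=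
  ∏ t ∈ range k, (Polynomial.X + Polynomial.C (y (t + 1)))

theorem aeval_factPowPoly {S : Type*} [CommRing S] [Algebra R S] (y : ℤ → R) (k : ℕ) (z : S) :
    Polynomial.aeval z (factPowPoly y k) = factPow (fun t => algebraMap R S (y t)) k z := by
  simp [factPowPoly, factPow, map_prod]

theorem monic_factPowPoly (y : ℤ → R) (k : ℕ) : (factPowPoly y k).Monic :=
  Polynomial.monic_prod_of_monic _ _ fun _ _ => Polynomial.monic_X_add_C _

theorem natDegree_factPowPoly [Nontrivial R] (y : ℤ → R) (k : ℕ) :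
    (factPowPoly y k).natDegree = k := by
  rw [factPowPoly,
    Polynomial.natDegree_prod_of_monic _ _ fun _ _ => Polynomial.monic_X_add_C _]
  simp

theorem coeff_factPowPoly_X (i j : ℕ) :
    (factPowPoly (X : ℤ → MvPolynomial ℤ ℤ) i).coeff j = eY i ((i : ℤ) - j) := by
  by_cases hji : j ≤ i
  · have succ_injective : Function.Injective fun k : ℕ => (k + 1 : ℤ) := fun a b => by simp
    have indices_eq : ((range i : Finset ℤ).image fun k => (k + 1 : ℤ)) =
        (range i).map ⟨_, succ_injective⟩ := by
      ext a
      simp [← sub_eq_add_neg, eq_sub_iff_add_eq]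
    rw [factPowPoly, Finset.prod_X_add_C_coeff _ _ (by simpa using hji), eY,
      if_pos (by omega), card_range, show ((i : ℤ) - j).toNat = i - j by omega,
      indices_eq, powersetCard_map, sum_map]
    simp
  · rw [eY, if_neg (by omega)]
    exact Polynomial.coeff_eq_zero_of_natDegree_lt (by rw [natDegree_factPowPoly]; omega)

/-- The `N × N` matrix whose rows expand the factorial powers in ordinary powers. For generic `y`
it is the matrix `A = (e_{i-j}(y_1, …, y_i))`. -/
noncomputable def factPowMatrix (y : ℤ → R) (N : ℕ) : Matrix (Fin N) (Fin N) R :=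
  Matrix.of fun i j => (factPowPoly y i).coeff j

theorem det_factPowMatrix (y : ℤ → R) (N : ℕ) : (factPowMatrix y N).det = 1 := by
  nontriviality R
  have isLowerTriangular : (factPowMatrix y N).IsLowerTriangular := fun i j hij =>
    Polynomial.coeff_eq_zero_of_natDegree_lt ((natDegree_factPowPoly y i).trans_lt hij)
  rw [Matrix.det_of_isLowerTriangular _ isLowerTriangular]
  refine prod_eq_one fun i _ => ?_
  simpa [natDegree_factPowPoly, factPowMatrix] using (monic_factPowPoly y i).coeff_natDegree

variable [IsDomain R]

/-- The factorial powers as a sequence of polynomials of degrees `0, 1, 2, …`. -/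
noncomputable def factPowSequence (y : ℤ → R) : Polynomial.Sequence R where
  elems' := factPowPoly y
  degree_eq' k := by
    rw [Polynomial.degree_eq_natDegree (monic_factPowPoly y k).ne_zero, natDegree_factPowPoly]

theorem isUnit_leadingCoeff_factPowSequence (y : ℤ → R) (k : ℕ) :
    IsUnit (factPowSequence y k).leadingCoeff := by
  rw [show (factPowSequence y k).leadingCoeff = 1 from monic_factPowPoly y k]
  exact isUnit_one

/-- The coefficient of the factorial power `(x | y)^k` in the expansion of a polynomial in
factorial powers. -/
noncomputable def factPowCoord (y : ℤ → R) (k : ℕ) : Polynomial R →ₗ[R] R :=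
  ((factPowSequence y).basis (isUnit_leadingCoeff_factPowSequence y)).coord k

theorem factPowCoord_factPowPoly (y : ℤ → R) (k l : ℕ) :
    factPowCoord y k (factPowPoly y l) = if l = k then 1 else 0 := by
  rw [show factPowPoly y l = factPowSequence y l from rfl,
    ← (factPowSequence y).basis_eq_self (isUnit_leadingCoeff_factPowSequence y), factPowCoord,
    Module.Basis.coord_apply, Module.Basis.repr_self,
    Finsupp.single_apply]

/-- The `N × N` matrix whose rows expand the ordinary powers in factorial powers. -/
noncomputable def powMatrix (y : ℤ → R) (N : ℕ) : Matrix (Fin N) (Fin N) R :=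
  Matrix.of fun i j => factPowCoord y j (Polynomial.X ^ (i : ℕ))

theorem factPowMatrix_mul_powMatrix (y : ℤ → R) (N : ℕ) :
    factPowMatrix y N * powMatrix y N = 1 := by
  ext i k
  have expansion : factPowPoly y i =
      ∑ j : Fin N, (factPowPoly y i).coeff j • Polynomial.X ^ (j : ℕ) := by
    simp only [Polynomial.smul_eq_C_mul]
    rw [Fin.sum_univ_eq_sum_range fun j =>
      Polynomial.C ((factPowPoly y i).coeff j) * Polynomial.X ^ j]
    exact Polynomial.as_sum_range_C_mul_X_pow' _ (by rw [natDegree_factPowPoly]; exact i.2)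
  have := congrArg (factPowCoord y k) expansion
  simp only [factPowCoord_factPowPoly, map_sum, map_smul, smul_eq_mul, Fin.val_inj] at this
  rw [Matrix.one_apply, this, Matrix.mul_apply]
  rfl

end FactorialBasis

section Coefficients

variable {n : ℕ}

theorem strictMono_sortedIndex {ν : Fin n → ℕ} (hν : IsPartition ν) :
    StrictMono (sortedIndex ν) := fun _ _ hij =>
  add_lt_add_of_le_of_lt (hν (Fin.rev_le_rev.2 hij.le)) hij

theorem sortedIndex_injective :
    Function.Injective (sortedIndex : (Fin n → ℕ) → Fin n → ℕ) := by
  intro ν ν' h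
  funext i
  simpa [sortedIndex] using congrFun h i.rev

variable {R : Type*} [CommRing R]

theorem det_aeval_factPowPoly_sortedIndex (y : ℤ → R) {ν : Fin n → ℕ} (hν : IsPartition ν) :
    (Matrix.of fun i j => Polynomial.aeval (X j : MvPolynomial (Fin n) R)
        (factPowPoly y (sortedIndex ν i))).det =
      (Matrix.vandermonde X).det * factSchur ν X (fun t => C (y t)) := by
  simp only [aeval_factPowPoly, algebraMap_eq]
  exact det_factPow_sortedIndex _ hν _

variable [IsDomain R]

theorem det_factPowCoord_factPowPoly (y : ℤ → R) {mu ν : Fin n → ℕ} (hmu : IsPartition mu)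
    (hν : IsPartition ν) :
    (Matrix.of fun i j =>
        factPowCoord y (sortedIndex mu j) (factPowPoly y (sortedIndex ν i))).det =
      if ν = mu then 1 else 0 := by
  simp only [factPowCoord_factPowPoly, ← sortedIndex_injective.eq_iff (a := ν) (b := mu)]
  convert det_ite_eq_of_strictMono (strictMono_sortedIndex hν) (strictMono_sortedIndex hmu)

/- After multiplication by the Vandermonde determinant, both sides of `hdexp` are determinants
whose columns involve one variable each; taking coordinates with respect to the factorial powers
in each variable isolates the coefficient of `mu`. -/
theorem coeff_eq_det_factPowCoord (y : ℤ → R) {lam mu : Fin n → ℕ} (hlam : IsPartition lam)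
    (hmu : IsPartition mu) (d : (Fin n → ℕ) →₀ R) (hdsupp : ∀ ν, d ν ≠ 0 → IsPartition ν)
    (hdexp : factSchur lam (X : Fin n → MvPolynomial (Fin n) R) (fun _ => 0) =
      d.sum fun ν p => C p * factSchur ν X fun t => C (y t)) :
    d mu = (Matrix.of fun i j =>
      factPowCoord y (sortedIndex mu j) (Polynomial.X ^ sortedIndex lam i)).det := by
  let Φ := productFunctional fun j : Fin n => factPowCoord y (sortedIndex mu j)
  have monomials : (Matrix.vandermonde X).det * factSchur lam X (fun _ => 0) =
      (Matrix.of fun i j : Fin n => Polynomial.aeval (X j : MvPolynomial (Fin n) R)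
        (Polynomial.X ^ sortedIndex lam i : Polynomial R)).det := by
    rw [← det_factPow_sortedIndex _ hlam]
    simp only [factPow_zero_left, map_pow, Polynomial.aeval_X]
  have value (ν : Fin n → ℕ) (hν : ν ∈ d.support) :
      Φ ((Matrix.vandermonde X).det * (C (d ν) * factSchur ν X fun t => C (y t))) =
        if ν = mu then d ν else 0 := by
    have hν := hdsupp ν (Finsupp.mem_support_iff.1 hν)
    rw [mul_left_comm, ← det_aeval_factPowPoly_sortedIndex y hν, ← smul_eq_C_mul, map_smul,
      productFunctional_det_aeval, det_factPowCoord_factPowPoly y hmu hν, smul_eq_mul, mul_ite,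
      mul_one, mul_zero]
  rw [← productFunctional_det_aeval, ← monomials, hdexp, Finsupp.sum, mul_sum, map_sum,
    sum_congr rfl value, sum_ite_eq']
  simp +contextual [eq_comm]

end Coefficients

section ComplementaryIndices

variable {n m : ℕ}

theorem sortedIndex_conjComp (lam : Fin n → ℕ) (k : Fin m) :
    sortedIndex (conjComp n m lam) k = n - #{i | (k : ℕ) < lam i} + k := by
  rw [sortedIndex, conjComp, Fin.val_rev, show m - (m - (k + 1)) = (k : ℕ) + 1 by omega]
  rfl

theorem strictMono_sortedIndex_conjComp (lam : Fin n → ℕ) :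
    StrictMono (sortedIndex (conjComp n m lam)) := by
  intro k l hkl
  rw [sortedIndex_conjComp, sortedIndex_conjComp]
  have card_le : #{i | (l : ℕ) < lam i} ≤ #{i | (k : ℕ) < lam i} :=
    card_le_card fun i hi => by
      simp only [mem_filter, mem_univ, true_and] at hi ⊢
      exact (Fin.lt_def.1 hkl).trans hi
  have : (k : ℕ) < l := hkl
  omega

theorem lt_card_filter_lt_iff {lam : Fin n → ℕ} (hlam : IsPartition lam) {k : ℕ} {i : Fin n} :
    (i : ℕ) < #{t | k < lam t} ↔ k < lam i :=
  Fin.lt_card_filter_univ_iff_apply_of_imp (fun t => k < lam t)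
    fun _ _ hle hlt => hlt.trans_le (hlam hle)

theorem sortedIndex_conjComp_lt_iff {lam : Fin n → ℕ} (hlam : IsPartition lam) (k : Fin m)
    (i : Fin n) :
    sortedIndex (conjComp n m lam) k < sortedIndex lam i ↔ (k : ℕ) < lam i.rev := by
  have lt_card_iff := lt_card_filter_lt_iff hlam (k := k) (i := i.rev)
  rw [sortedIndex_conjComp, sortedIndex, ← lt_card_iff]
  rw [Fin.val_rev] at lt_card_iff ⊢
  omega

theorem sortedIndex_conjComp_ne {lam : Fin n → ℕ} (hlam : IsPartition lam) (k : Fin m)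
    (i : Fin n) : sortedIndex (conjComp n m lam) k ≠ sortedIndex lam i := by
  have lt_card_iff := lt_card_filter_lt_iff hlam (k := k) (i := i.rev)
  rw [sortedIndex_conjComp, sortedIndex]
  rw [Fin.val_rev] at lt_card_iff
  omega

theorem sortedIndex_lt {lam : Fin n → ℕ} (hlam : ∀ i, lam i ≤ m) (i : Fin n) :
    sortedIndex lam i < n + m := by
  have := hlam i.rev
  rw [sortedIndex]
  omega

theorem sortedIndex_conjComp_lt (lam : Fin n → ℕ) (k : Fin m) :
    sortedIndex (conjComp n m lam) k < n + m := by
  rw [sortedIndex_conjComp]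
  omega

/-- The elements of `I_{lam^c}`, in increasing order, as indices of an `N × N` matrix. -/
noncomputable def complIndex (lam : Fin n → ℕ) (k : Fin m) : Fin (n + m) :=
  ⟨sortedIndex (conjComp n m lam) k, sortedIndex_conjComp_lt lam k⟩

/-- The shuffle of `{0, …, N - 1}` which lists `I_lam` in increasing order, followed by
`I_{lam^c}` in increasing order. -/
noncomputable def indexEquiv {lam : Fin n → ℕ} (hlam : IsPartition lam) (hle : ∀ i, lam i ≤ m) :
    Fin n ⊕ Fin m ≃ Fin (n + m) :=
  Equiv.ofBijective
    (Sum.elim (fun i => ⟨sortedIndex lam i, sortedIndex_lt hle i⟩) (complIndex lam))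
    ((Fintype.bijective_iff_injective_and_card _).2
      ⟨Function.Injective.sumElim
        (fun _ _ h => (strictMono_sortedIndex hlam).injective (Fin.val_eq_of_eq h))
        (fun _ _ h => (strictMono_sortedIndex_conjComp lam).injective (Fin.val_eq_of_eq h))
        fun i k h => sortedIndex_conjComp_ne hlam k i (Fin.val_eq_of_eq h).symm, by simp⟩)

theorem sign_indexEquiv {lam : Fin n → ℕ} (hlam : IsPartition lam) (hle : ∀ i, lam i ≤ m) :
    Equiv.Perm.sign (finSumFinEquiv.symm.trans (indexEquiv hlam hle)) = (-1) ^ ∑ i, lam i := by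
  have strictMono_inl : StrictMono (indexEquiv hlam hle ∘ Sum.inl) := strictMono_sortedIndex hlam
  have strictMono_inr : StrictMono (indexEquiv hlam hle ∘ Sum.inr) :=
    strictMono_sortedIndex_conjComp lam
  rw [sign_of_strictMono_inl_inr _ strictMono_inl strictMono_inr, ← Equiv.sum_comp Fin.revPerm lam]
  congr 1
  refine sum_congr rfl fun i _ => ?_
  calc #{k | indexEquiv hlam hle (Sum.inr k) < indexEquiv hlam hle (Sum.inl i)}
      = #{k : Fin m | (k : ℕ) < lam i.rev} :=
        congrArg card (filter_congr fun k _ => sortedIndex_conjComp_lt_iff hlam k i)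
    _ = lam i.rev := by rw [Fin.card_filter_val_lt, min_eq_right (hle _)]

end ComplementaryIndices

section ComplementaryMinor

variable {R : Type*} [CommRing R] [IsDomain R] {n m : ℕ}

theorem det_factPowCoord_eq_sign_mul_det_factPowMatrix (y : ℤ → R) {lam mu : Fin n → ℕ}
    (hlam : IsPartition lam) (hmu : IsPartition mu) (hlamm : ∀ i, lam i ≤ m)
    (hmum : ∀ i, mu i ≤ m) :
    (Matrix.of fun i j =>
        factPowCoord y (sortedIndex mu j) (Polynomial.X ^ sortedIndex lam i)).det =
      (-1) ^ (∑ i, lam i + ∑ i, mu i) *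
        ((factPowMatrix y (n + m)).submatrix (complIndex mu) (complIndex lam)).det := by
  let eL := indexEquiv hlam hlamm
  let eM := indexEquiv hmu hmum
  have mul_eq_one : (factPowMatrix y (n + m)).submatrix eM eL *
      (powMatrix y (n + m)).submatrix eL eM = 1 := by
    rw [Matrix.submatrix_mul_equiv, factPowMatrix_mul_powMatrix, Matrix.submatrix_one_equiv]
  have det_shuffled : ((factPowMatrix y (n + m)).submatrix eM eL).det =
      (-1) ^ (∑ i, lam i + ∑ i, mu i) := by
    rw [det_submatrix_equiv_equiv _ eM eL finSumFinEquiv.symm, sign_indexEquiv, sign_indexEquiv,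
      det_factPowMatrix, add_comm, pow_add]
    simp
  have sign_sq : (-1 : R) ^ (∑ i, lam i + ∑ i, mu i) * (-1) ^ (∑ i, lam i + ∑ i, mu i) = 1 := by
    rw [← mul_pow]
    simp
  have jacobi := det_mul_det_toBlocks₁₁_of_mul_eq_one mul_eq_one
  rw [det_shuffled] at jacobi
  calc _ = ((powMatrix y (n + m)).submatrix eL eM).toBlocks₁₁.det := rfl
    _ = (-1) ^ (∑ i, lam i + ∑ i, mu i) *
        ((factPowMatrix y (n + m)).submatrix eM eL).toBlocks₂₂.det := by
      rw [← jacobi, ← mul_assoc, sign_sq, one_mul]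
    _ = _ := rfl

theorem d_coeff_eq_sign_times_minor_general (y : ℤ → R) {lam mu : Fin n → ℕ}
    (hlam : IsPartition lam) (hmu : IsPartition mu) (hlamm : ∀ i, lam i ≤ m)
    (hmum : ∀ i, mu i ≤ m) (d : (Fin n → ℕ) →₀ R) (hdsupp : ∀ ν, d ν ≠ 0 → IsPartition ν)
    (hdexp : factSchur lam (X : Fin n → MvPolynomial (Fin n) R) (fun _ => 0) =
      d.sum fun ν p => C p * factSchur ν X fun t => C (y t)) :
    d mu = (-1) ^ (∑ i, lam i + ∑ i, mu i) *
      ((factPowMatrix y (n + m)).submatrix (complIndex mu) (complIndex lam)).det := by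
  rw [coeff_eq_det_factPowCoord y hlam hmu d hdsupp hdexp,
    det_factPowCoord_eq_sign_mul_det_factPowMatrix y hlam hmu hlamm hmum]

end ComplementaryMinor

section Generic

theorem schurN_eq_factSchur (n : ℕ) (lam : Fin n → ℕ) :
    schurN n lam = factSchur lam (fun i => X (Sum.inl i)) fun _ => 0 := by
  simp only [schurN, factSchur, tableauWeight, add_zero]

theorem factSchurN_eq_factSchur (n : ℕ) (lam : Fin n → ℕ) :
    factSchurN n lam = factSchur lam (fun i => X (Sum.inl i)) fun t => X (Sum.inr t) := rfl

theorem factSchur_eq_sum_of_schurN_eq_sum {n : ℕ} {lam : Fin n → ℕ}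
    {d : (Fin n → ℕ) →₀ MvPolynomial ℤ ℤ}
    (h : schurN n lam = d.sum fun ν p => rename Sum.inr p * factSchurN n ν) :
    factSchur lam (X : Fin n → MvPolynomial (Fin n) (MvPolynomial ℤ ℤ)) (fun _ => 0) =
      d.sum fun ν p => C p * factSchur ν X fun t => C (X t : MvPolynomial ℤ ℤ) := by
  let φ : MvPolynomial (Fin n ⊕ ℤ) ℤ →+* MvPolynomial (Fin n) (MvPolynomial ℤ ℤ) :=
    sumAlgEquiv ℤ (Fin n) ℤ
  have φ_inl (i : Fin n) : φ (X (Sum.inl i)) = X i := sumAlgEquiv_X_inl ℤ (Fin n) ℤ i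
  have φ_inr (t : ℤ) : φ (X (Sum.inr t)) = C (X t) := sumAlgEquiv_X_inr ℤ (Fin n) ℤ t
  have φ_rename (p : MvPolynomial ℤ ℤ) : φ (rename Sum.inr p) = C p :=
    DFunLike.congr_fun (sumAlgEquiv_comp_rename_inr ℤ (Fin n) ℤ) p
  simpa only [schurN_eq_factSchur, factSchurN_eq_factSchur, Finsupp.sum, map_sum, map_mul,
    map_factSchur, φ_inl, φ_inr, φ_rename, map_zero] using congrArg φ h

theorem factPowMatrix_X_submatrix_complIndex {n m : ℕ} (lam mu : Fin n → ℕ) :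
    (factPowMatrix X (n + m)).submatrix (complIndex mu) (complIndex lam) =
      Matrix.of fun k l : Fin m =>
        eY (conjComp n m mu k.rev + (k : ℕ))
          (((conjComp n m mu k.rev + (k : ℕ) : ℕ) : ℤ)
            - ((conjComp n m lam l.rev + (l : ℕ) : ℕ) : ℤ)) := by
  ext1 k l
  exact coeff_factPowPoly_X _ _

end Generic

/-- equation (5) in the paper:
`d_{λ,n}^μ(y) = (-1)^{|λ|+|μ|} det(A_{I_{μ^c}, I_{λ^c}})`, where
`A = (e_{i-j}(y_1,…,y_i))_{0 ≤ i,j ≤ N-1}` and the submatrix has rows indexed by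
`I_{μ^c}` and columns by `I_{λ^c}`, each listed in increasing order.  The `k`-th
smallest element of `I_{ν^c} = {ν^c_i + m - i}` (for `k = 0, …, m-1`, 0-based) is
`ν^c_{m-1-k} + k` (0-based indexing of `ν^c`). -/
theorem d_coeff_eq_sign_times_minor (n m : ℕ) (hn : 1 ≤ n) (hm : 1 ≤ m)
    (lam mu : Fin n → ℕ) (hlam : IsPartition lam) (hmu : IsPartition mu)
    (hlamm : ∀ i, lam i ≤ m) (hmum : ∀ i, mu i ≤ m)
    (d : (Fin n → ℕ) →₀ MvPolynomial ℤ ℤ)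
    (hdsupp : ∀ ν, d ν ≠ 0 → IsPartition ν)
    (hdexp : schurN n lam = d.sum fun ν p => rename Sum.inr p * factSchurN n ν) :
    d mu = (-1 : MvPolynomial ℤ ℤ) ^ (∑ i, lam i + ∑ i, mu i) *
      Matrix.det (Matrix.of fun k l : Fin m =>
        eY (conjComp n m mu k.rev + (k : ℕ))
          (((conjComp n m mu k.rev + (k : ℕ) : ℕ) : ℤ)
            - ((conjComp n m lam l.rev + (l : ℕ) : ℕ) : ℤ))) := by
  rw [← factPowMatrix_X_submatrix_complIndex]
  exact d_coeff_eq_sign_times_minor_general X hlam hmu hlamm hmum d hdsupp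
    (factSchur_eq_sum_of_schurN_eq_sum hdexp)
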